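/- Let ρ ∈ (−1, 1), let f_ρ(z₁, z₂) = (1/(2π√(1−ρ²)))·exp(−(z₁² − 2ρz₁z₂ + z₂²)/(2(1−ρ²))) be the standard bivariate Gaussian density with correlation ρ, let φ(z) = (1/√(2π))·exp(−z²/2), Φ(z) = ∫_{−∞}^z φ(t) dt, and let He_n denote the n-th probabilists' Hermite polynomial. Then for all real a, b: ∫_a^∞ ∫_b^∞ f_ρ(z₁, z₂) dz₂ dz₁ = (1 − Φ(a))·(1 − Φ(b)) + φ(a)·φ(b)·∑_{n=1}^∞ (ρⁿ/n!)·He_{n−1}(a)·He_{n−1}(b), and the series converges. -/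

import Mathlib

open Real

/-- The standard Gaussian probability density function. -/
noncomputable def stdGaussPDF (z : ℝ) : ℝ :=
  (1 / Real.sqrt (2 * Real.pi)) * Real.exp (-z ^ 2 / 2)

/-- The standard Gaussian cumulative distribution function. -/
noncomputable def stdGaussCDF (z : ℝ) : ℝ :=
  ∫ t in Set.Iic z, stdGaussPDF t

/-- The `n`-th probabilists' Hermite polynomial, via the Rodrigues formula
`He_n(z) = (−1)ⁿ·exp(z²/2)·(dⁿ/dzⁿ)exp(−z²/2)`. -/
noncomputable def He (n : ℕ) (z : ℝ) : ℝ :=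
  (-1 : ℝ) ^ n * Real.exp (z ^ 2 / 2) *
    iteratedDeriv n (fun x : ℝ => Real.exp (-x ^ 2 / 2)) z

/-- The standard bivariate Gaussian density with correlation `ρ`. -/
noncomputable def bivGaussPDF (ρ z₁ z₂ : ℝ) : ℝ :=
  (1 / (2 * Real.pi * Real.sqrt (1 - ρ ^ 2))) *
    Real.exp (-(z₁ ^ 2 - 2 * ρ * z₁ * z₂ + z₂ ^ 2) / (2 * (1 - ρ ^ 2)))

open MeasureTheory Polynomial Filter Topology

/-! ### Hermite polynomials and Hermite functions -/

theorem He_eq_aeval_hermite (n : ℕ) (x : ℝ) : He n x = aeval x (hermite n) := by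
  rw [He, hermite_eq_deriv_gaussian', iteratedDeriv_eq_iterate]
  simp only [neg_div]
  ring

theorem derivative_hermite_succ (n : ℕ) :
    derivative (hermite (n + 1)) = ((n : ℤ[X]) + 1) * hermite n := by
  induction n with
  | zero => simp [hermite_succ]
  | succ n ih =>
    rw [hermite_succ (n + 1), derivative_sub, derivative_mul, derivative_X, ih,
      derivative_mul, hermite_succ n]
    simp
    ring

/-- The Hermite function `He_n · φ`, which is `(-1)ⁿ` times the `n`-th derivative of `φ`. -/
noncomputable def hermiteFun (n : ℕ) (x : ℝ) : ℝ := aeval x (hermite n) * stdGaussPDF x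

theorem hasDerivAt_stdGaussPDF (x : ℝ) : HasDerivAt stdGaussPDF (-x * stdGaussPDF x) x := by
  have h : HasDerivAt (fun z : ℝ => -z ^ 2 / 2) (-x) x := by
    refine ((hasDerivAt_pow 2 x).neg.div_const 2).congr_deriv ?_
    norm_num
    ring
  refine (h.exp.const_mul (1 / √(2 * π))).congr_deriv ?_
  rw [stdGaussPDF]
  ring

theorem hasDerivAt_hermiteFun (n : ℕ) (x : ℝ) :
    HasDerivAt (hermiteFun n) (-hermiteFun (n + 1) x) x := by
  refine ((Polynomial.hasDerivAt_aeval (hermite n) x).mul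
    (hasDerivAt_stdGaussPDF x)).congr_deriv ?_
  rw [hermiteFun, hermite_succ, map_sub, map_mul, aeval_X]
  ring

theorem integrable_pow_mul_exp_neg_sq_div_two (n : ℕ) :
    Integrable fun x : ℝ => x ^ n * Real.exp (-x ^ 2 / 2) := by
  have h := integrable_rpow_mul_exp_neg_mul_sq (b := 1 / 2) (by norm_num) (s := n)
    (by linarith [n.cast_nonneg (α := ℝ)])
  refine h.congr (Eventually.of_forall fun x => ?_)
  simp only [Real.rpow_natCast]
  ring_nf

theorem integrable_aeval_mul_stdGaussPDF (p : ℤ[X]) :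
    Integrable fun x : ℝ => aeval x p * stdGaussPDF x := by
  simp_rw [aeval_eq_sum_range, Finset.sum_mul]
  refine integrable_finsetSum _ fun i _ => ?_
  refine ((integrable_pow_mul_exp_neg_sq_div_two i).const_mul
    ((p.coeff i : ℝ) * (1 / √(2 * π)))).congr (Eventually.of_forall fun x => ?_)
  simp only [stdGaussPDF, zsmul_eq_mul]
  ring

theorem integrable_hermiteFun (n : ℕ) : Integrable (hermiteFun n) :=
  integrable_aeval_mul_stdGaussPDF _

theorem stdGaussPDF_pos (x : ℝ) : 0 < stdGaussPDF x := by
  unfold stdGaussPDF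
  positivity

theorem integrable_stdGaussPDF : Integrable stdGaussPDF := by
  simpa using integrable_aeval_mul_stdGaussPDF 1

theorem integral_stdGaussPDF : ∫ x, stdGaussPDF x = 1 := by
  have h := integral_gaussian (1 / 2)
  have h2 : ∀ x : ℝ, stdGaussPDF x = 1 / √(2 * π) * Real.exp (-(1 / 2) * x ^ 2) := fun x => by
    rw [stdGaussPDF]; ring_nf
  simp_rw [h2, integral_const_mul, h]
  rw [show π / (1 / 2) = 2 * π by ring]
  have : √(2 * π) ≠ 0 := by positivity
  field_simp

theorem integral_aeval_hermite_mul_hermiteFun (n : ℕ) :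
    ∫ x, aeval x (hermite n) * hermiteFun n x = n.factorial := by
  induction n with
  | zero => simp [hermiteFun, integral_stdGaussPDF]
  | succ n ih =>
    have hint (p : ℤ[X]) (m : ℕ) : Integrable fun x : ℝ => aeval x p * hermiteFun m x := by
      refine (integrable_aeval_mul_stdGaussPDF (p * hermite m)).congr
        (Eventually.of_forall fun x => ?_)
      simp only [hermiteFun, map_mul]
      ring
    have key := integral_mul_deriv_eq_deriv_mul_of_integrable
      (u := fun x : ℝ => aeval x (hermite (n + 1))) (v := hermiteFun n)
      (u' := fun x : ℝ => aeval x (derivative (hermite (n + 1))))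
      (v' := fun x => -hermiteFun (n + 1) x)
      (fun x _ => Polynomial.hasDerivAt_aeval _ x) (fun x _ => hasDerivAt_hermiteFun n x)
      ((hint (hermite (n + 1)) (n + 1)).neg.congr (Eventually.of_forall fun x => by
        simp only [Pi.neg_apply, Pi.mul_apply, mul_neg])) (hint _ _) (hint _ _)
    simp only [mul_neg, integral_neg, neg_inj] at key
    rw [key, derivative_hermite_succ]
    simp only [map_mul, map_add, map_natCast, map_one, mul_assoc, integral_const_mul, ih]
    push_cast [Nat.factorial_succ]
    ring

theorem integral_abs_hermiteFun_le (n : ℕ) : ∫ x, |hermiteFun n x| ≤ √(n.factorial) := by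
  set c : ℝ := √(n.factorial)
  have hc0 : 0 < c := Real.sqrt_pos.2 (by exact_mod_cast n.factorial_pos)
  have hcc : c * c = n.factorial := Real.mul_self_sqrt (by positivity)
  have hsq : Integrable fun x : ℝ => aeval x (hermite n) * hermiteFun n x := by
    refine (integrable_aeval_mul_stdGaussPDF (hermite n * hermite n)).congr
      (Eventually.of_forall fun x => ?_)
    simp only [hermiteFun, map_mul]
    ring
  calc ∫ x, |hermiteFun n x|
      ≤ ∫ x, (c / 2 * stdGaussPDF x + 1 / (2 * c) * (aeval x (hermite n) * hermiteFun n x)) := by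
        refine integral_mono (integrable_hermiteFun n).abs
          ((integrable_stdGaussPDF.const_mul _).add (hsq.const_mul _)) fun x => ?_
        simp only [hermiteFun, abs_mul, abs_of_pos (stdGaussPDF_pos x)]
        set y : ℝ := aeval x (hermite n)
        have h : |y| ≤ c / 2 + 1 / (2 * c) * (y * y) := by
          rw [← abs_mul_abs_self y]
          field_simp
          nlinarith [sq_nonneg (|y| - c)]
        calc |y| * stdGaussPDF x ≤ (c / 2 + 1 / (2 * c) * (y * y)) * stdGaussPDF x :=
              mul_le_mul_of_nonneg_right h (stdGaussPDF_pos x).le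
          _ = _ := by ring
    _ = c := by
        rw [integral_add (integrable_stdGaussPDF.const_mul _) (hsq.const_mul _),
          integral_const_mul, integral_const_mul, integral_stdGaussPDF,
          integral_aeval_hermite_mul_hermiteFun, ← hcc]
        field_simp
        norm_num

theorem setIntegral_Ioi_hermiteFun_succ (n : ℕ) (a : ℝ) :
    ∫ x in Set.Ioi a, hermiteFun (n + 1) x = hermiteFun n a := by
  have hlim : Tendsto (hermiteFun n) atTop (𝓝 0) :=
    tendsto_zero_of_hasDerivAt_of_integrableOn_Ioi (a := a)
      (fun x _ => hasDerivAt_hermiteFun n x) (integrable_hermiteFun _).neg.integrableOn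
      (integrable_hermiteFun _).integrableOn
  have h := integral_Ioi_of_hasDerivAt_of_tendsto' (a := a)
    (fun x _ => hasDerivAt_hermiteFun n x) (integrable_hermiteFun (n + 1)).neg.integrableOn hlim
  rw [integral_neg] at h
  linarith

theorem setIntegral_Ioi_hermiteFun_zero (a : ℝ) :
    ∫ x in Set.Ioi a, hermiteFun 0 x = 1 - stdGaussCDF a := by
  have h := integral_add_compl (measurableSet_Iic (a := a)) integrable_stdGaussPDF
  rw [integral_stdGaussPDF, Set.compl_Iic] at h
  simp only [hermiteFun, hermite_zero, map_one, one_mul, stdGaussCDF]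
  linarith

theorem setIntegral_abs_hermiteFun_le (n : ℕ) (s : Set ℝ) :
    ∫ x in s, |hermiteFun n x| ≤ √(n.factorial) :=
  (setIntegral_le_integral (integrable_hermiteFun n).abs
    (Eventually.of_forall fun _ => abs_nonneg _)).trans (integral_abs_hermiteFun_le n)

/-! ### Fourier representation and the Mehler kernel -/

/-- The Gaussian-weighted Fourier character `exp (-t² / 2 - i t x)`. -/
noncomputable def gaussChar (x t : ℝ) : ℂ := Complex.exp (-(t : ℂ) ^ 2 / 2 - Complex.I * t * x)

theorem norm_gaussChar (x t : ℝ) : ‖gaussChar x t‖ = Real.exp (-t ^ 2 / 2) := by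
  rw [gaussChar, Complex.norm_exp]
  congr 1
  have : -(t : ℂ) ^ 2 / 2 - Complex.I * t * x
      = ((-t ^ 2 / 2 : ℝ) : ℂ) + ((-(t * x) : ℝ) : ℂ) * Complex.I := by
    push_cast; ring
  rw [this, Complex.add_re, Complex.re_ofReal_mul, Complex.ofReal_re, Complex.I_re, mul_zero,
    add_zero]

theorem continuous_gaussChar (x : ℝ) : Continuous (gaussChar x) := by
  unfold gaussChar
  fun_prop

theorem integrable_pow_mul_gaussChar (n : ℕ) (x : ℝ) :
    Integrable fun t : ℝ => (Complex.I * t) ^ n * gaussChar x t := by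
  refine (integrable_pow_mul_exp_neg_sq_div_two n).norm.mono'
    (((by fun_prop : Continuous fun t : ℝ => (Complex.I * t) ^ n).mul
      (continuous_gaussChar x)).aestronglyMeasurable) (Eventually.of_forall fun t => ?_)
  simp [norm_gaussChar]

theorem ofReal_cpow_half {r : ℝ} (hr : 0 ≤ r) : (r : ℂ) ^ (1 / 2 : ℂ) = (√r : ℝ) := by
  rw [Real.sqrt_eq_rpow, Complex.ofReal_cpow hr]
  norm_num

theorem hasDerivAt_integral_pow_mul_gaussChar (n : ℕ) (x : ℝ) :
    HasDerivAt (fun x : ℝ => ∫ t : ℝ, (Complex.I * t) ^ n * gaussChar x t)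
      (-∫ t : ℝ, (Complex.I * t) ^ (n + 1) * gaussChar x t) x := by
  rw [← integral_neg]
  refine (hasDerivAt_integral_of_dominated_loc_of_deriv_le (s := Set.univ)
    (bound := fun t : ℝ => ‖t ^ (n + 1) * Real.exp (-t ^ 2 / 2)‖)
    (F' := fun x t => -((Complex.I * t) ^ (n + 1) * gaussChar x t)) univ_mem
    (Eventually.of_forall fun y => (integrable_pow_mul_gaussChar n y).aestronglyMeasurable)
    (integrable_pow_mul_gaussChar n x)
    (integrable_pow_mul_gaussChar (n + 1) x).neg.aestronglyMeasurable
    (Eventually.of_forall fun t y _ => ?_)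
    (integrable_pow_mul_exp_neg_sq_div_two (n + 1)).norm
    (Eventually.of_forall fun t y _ => ?_)).2
  · simp [norm_gaussChar]
  · have h : HasDerivAt (fun y : ℝ => -(t : ℂ) ^ 2 / 2 - Complex.I * t * y)
        (-(Complex.I * t)) y := by
      simpa using ((Complex.ofRealCLM.hasDerivAt (x := y)).const_mul
        (Complex.I * (t : ℂ))).const_sub (-(t : ℂ) ^ 2 / 2)
    refine (h.cexp.const_mul ((Complex.I * (t : ℂ)) ^ n)).congr_deriv ?_
    rw [gaussChar]
    ring

theorem integral_gaussChar (x : ℝ) :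
    ∫ t : ℝ, gaussChar x t = ((2 * π * stdGaussPDF x : ℝ) : ℂ) := by
  have h := integral_cexp_quadratic (b := -1 / 2) (by norm_num) (-(Complex.I * x)) 0
  have h2 (t : ℝ) : gaussChar x t
      = Complex.exp (-1 / 2 * (t : ℂ) ^ 2 + -(Complex.I * x) * t + 0) := by
    rw [gaussChar]; ring_nf
  simp_rw [h2]
  rw [h, show (π : ℂ) / -(-1 / 2) = ((2 * π : ℝ) : ℂ) by push_cast; ring,
    ofReal_cpow_half (by positivity), stdGaussPDF,
    show (0 : ℂ) - (-(Complex.I * x)) ^ 2 / (4 * (-1 / 2)) = ((-x ^ 2 / 2 : ℝ) : ℂ) by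
      push_cast; ring_nf; rw [Complex.I_sq]; ring,
    ← Complex.ofReal_exp, ← Complex.ofReal_mul, ← mul_assoc]
  congr 2
  rw [mul_one_div, Real.div_sqrt]

theorem integral_pow_mul_gaussChar (n : ℕ) (x : ℝ) :
    ∫ t : ℝ, (Complex.I * t) ^ n * gaussChar x t = ((2 * π * hermiteFun n x : ℝ) : ℂ) := by
  induction n generalizing x with
  | zero => simpa [hermiteFun] using integral_gaussChar x
  | succ n ih =>
    have h1 := hasDerivAt_integral_pow_mul_gaussChar n x
    simp_rw [ih] at h1
    have h2 := ((hasDerivAt_hermiteFun n x).const_mul (2 * π)).ofReal_comp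
    have := h1.unique h2
    rw [neg_eq_iff_eq_neg] at this
    rw [this]
    push_cast
    ring

theorem integrable_exp_neg_mul_add_sq {c : ℝ} (hc : 0 < c) :
    Integrable (fun p : ℝ × ℝ => Real.exp (-c * (p.1 ^ 2 + p.2 ^ 2))) := by
  refine ((integrable_exp_neg_mul_sq hc).mul_prod (integrable_exp_neg_mul_sq hc)).congr
    (Eventually.of_forall fun p => ?_)
  simp only [← Real.exp_add]
  ring_nf

theorem two_mul_abs_mul_le (ρ s t : ℝ) : 2 * |ρ * s * t| ≤ |ρ| * (s ^ 2 + t ^ 2) := by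
  rw [mul_assoc, abs_mul, abs_mul, ← sq_abs s, ← sq_abs t]
  nlinarith [mul_nonneg (abs_nonneg ρ) (sq_nonneg (|s| - |t|))]

theorem integrable_exp_abs_mul_mul {ρ : ℝ} (hρ : |ρ| < 1) :
    Integrable (fun p : ℝ × ℝ =>
      Real.exp |ρ * p.1 * p.2| * (Real.exp (-p.1 ^ 2 / 2) * Real.exp (-p.2 ^ 2 / 2))) := by
  refine (integrable_exp_neg_mul_add_sq (c := (1 - |ρ|) / 2) (by linarith)).mono'
    (Continuous.aestronglyMeasurable (by fun_prop)) (Eventually.of_forall fun p => ?_)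
  rw [Real.norm_of_nonneg (by positivity), ← Real.exp_add, ← Real.exp_add]
  gcongr
  linarith [two_mul_abs_mul_le ρ p.1 p.2]

theorem integral_exp_mul_gaussChar_mul_gaussChar {ρ : ℝ} (hρ : |ρ| < 1) (x y : ℝ) :
    ∫ p : ℝ × ℝ, Complex.exp (ρ * (Complex.I * p.1) * (Complex.I * p.2)) *
      (gaussChar x p.1 * gaussChar y p.2) = (((2 * π) ^ 2 * bivGaussPDF ρ x y : ℝ) : ℂ) := by
  have hρ2 : 0 < 1 - ρ ^ 2 := by
    have := (sq_lt_one_iff_abs_lt_one ρ).2 hρ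
    linarith
  have hρ2c : (ρ : ℂ) ^ 2 - 1 ≠ 0 := by
    have : ρ ^ 2 - 1 ≠ 0 := by linarith
    exact_mod_cast this
  have hint : Integrable fun p : ℝ × ℝ =>
      Complex.exp (ρ * (Complex.I * p.1) * (Complex.I * p.2)) *
        (gaussChar x p.1 * gaussChar y p.2) := by
    refine (integrable_exp_abs_mul_mul hρ).mono'
      (Continuous.aestronglyMeasurable (by unfold gaussChar; fun_prop))
      (Eventually.of_forall fun p => ?_)
    rw [norm_mul, norm_mul, norm_gaussChar, norm_gaussChar]
    gcongr
    refine (Complex.norm_exp_le_exp_norm _).trans (Real.exp_le_exp.2 ?_)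
    simp [abs_mul, mul_assoc]
  rw [Measure.volume_eq_prod, integral_prod _ hint]
  have hinner (s : ℝ) : ∫ t : ℝ, Complex.exp (ρ * (Complex.I * s) * (Complex.I * t)) *
        (gaussChar x s * gaussChar y t)
      = (√(2 * π) : ℝ) * Complex.exp ((((ρ : ℂ) ^ 2 - 1) / 2) * (s : ℂ) ^ 2
          + (Complex.I * (ρ * y - x)) * s + (-(y : ℂ) ^ 2 / 2)) := by
    have h := integral_cexp_quadratic (b := -1 / 2) (by norm_num) (-(ρ * s) - Complex.I * y)
      (-(s : ℂ) ^ 2 / 2 - Complex.I * s * x)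
    rw [show (π : ℂ) / -(-1 / 2) = ((2 * π : ℝ) : ℂ) by push_cast; ring,
      ofReal_cpow_half (by positivity)] at h
    convert h using 2
    · ext t
      rw [gaussChar, gaussChar, ← Complex.exp_add, ← Complex.exp_add]
      congr 1
      linear_combination (ρ : ℂ) * s * t * Complex.I_sq
    · congr 1
      linear_combination (-(y : ℂ) ^ 2 / 2) * Complex.I_sq
  simp_rw [hinner]
  rw [integral_const_mul, integral_cexp_quadratic
      (by
        rw [show ((ρ : ℂ) ^ 2 - 1) / 2 = (((ρ ^ 2 - 1) / 2 : ℝ) : ℂ) by push_cast; ring,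
          Complex.ofReal_re]
        linarith),
    show (π : ℂ) / -(((ρ : ℂ) ^ 2 - 1) / 2) = ((2 * π / (1 - ρ ^ 2) : ℝ) : ℂ) by
      have : (1 : ℂ) - (ρ : ℂ) ^ 2 ≠ 0 := by
        rw [← neg_sub]; exact neg_ne_zero.2 hρ2c
      push_cast
      rw [← neg_div, neg_sub]
      field_simp,
    ofReal_cpow_half (by positivity),
    show -(y : ℂ) ^ 2 / 2 - (Complex.I * (ρ * y - x)) ^ 2 / (4 * (((ρ : ℂ) ^ 2 - 1) / 2))
        = ((-(x ^ 2 - 2 * ρ * x * y + y ^ 2) / (2 * (1 - ρ ^ 2)) : ℝ) : ℂ) by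
      have : (1 : ℂ) - (ρ : ℂ) ^ 2 ≠ 0 := by
        rw [← neg_sub]; exact neg_ne_zero.2 hρ2c
      push_cast
      rw [mul_pow, Complex.I_sq, show (ρ : ℂ) ^ 2 - 1 = -(1 - (ρ : ℂ) ^ 2) by ring]
      field_simp
      ring,
    ← Complex.ofReal_exp, ← Complex.ofReal_mul, ← Complex.ofReal_mul, ← mul_assoc, bivGaussPDF,
    ← mul_assoc]
  congr 2
  rw [Real.sqrt_div (by positivity), ← mul_div_assoc, Real.mul_self_sqrt (by positivity)]
  have : √(1 - ρ ^ 2) ≠ 0 := (Real.sqrt_pos.2 hρ2).ne'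
  field_simp

theorem hasSum_bivGaussPDF {ρ : ℝ} (hρ : |ρ| < 1) (x y : ℝ) :
    HasSum (fun n : ℕ => ρ ^ n / (n.factorial : ℝ) * (hermiteFun n x * hermiteFun n y))
      (bivGaussPDF ρ x y) := by
  have hbound (p : ℝ × ℝ) : HasSum (fun n : ℕ => |ρ * p.1 * p.2| ^ n / (n.factorial : ℝ) *
      (Real.exp (-p.1 ^ 2 / 2) * Real.exp (-p.2 ^ 2 / 2)))
      (Real.exp |ρ * p.1 * p.2| * (Real.exp (-p.1 ^ 2 / 2) * Real.exp (-p.2 ^ 2 / 2))) := by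
    refine HasSum.mul_right _ ?_
    rw [Real.exp_eq_exp_ℝ]
    exact NormedSpace.expSeries_div_hasSum_exp _
  have h := hasSum_integral_of_dominated_convergence (μ := (volume : Measure (ℝ × ℝ)))
    (F := fun (n : ℕ) (p : ℝ × ℝ) =>
      ((ρ : ℂ) * (Complex.I * p.1) * (Complex.I * p.2)) ^ n / (n.factorial : ℂ) *
        (gaussChar x p.1 * gaussChar y p.2))
    (f := fun p => Complex.exp (ρ * (Complex.I * p.1) * (Complex.I * p.2)) *
      (gaussChar x p.1 * gaussChar y p.2))
    (fun n p => |ρ * p.1 * p.2| ^ n / (n.factorial : ℝ) *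
      (Real.exp (-p.1 ^ 2 / 2) * Real.exp (-p.2 ^ 2 / 2)))
    (fun n => Continuous.aestronglyMeasurable (by unfold gaussChar; fun_prop))
    (fun n => Eventually.of_forall fun p => by
      simp [norm_gaussChar, abs_mul])
    (Eventually.of_forall fun p => (hbound p).summable)
    (by simpa only [(hbound _).tsum_eq] using integrable_exp_abs_mul_mul hρ)
    (Eventually.of_forall fun p => by
      refine HasSum.mul_right _ ?_
      rw [Complex.exp_eq_exp_ℂ]
      exact NormedSpace.expSeries_div_hasSum_exp _)
  rw [integral_exp_mul_gaussChar_mul_gaussChar hρ] at h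
  have hterm (n : ℕ) : ∫ p : ℝ × ℝ,
      ((ρ : ℂ) * (Complex.I * p.1) * (Complex.I * p.2)) ^ n / (n.factorial : ℂ) *
        (gaussChar x p.1 * gaussChar y p.2)
      = (((2 * π) ^ 2 * (ρ ^ n / (n.factorial : ℝ) *
          (hermiteFun n x * hermiteFun n y)) : ℝ) : ℂ) := by
    have hfac (p : ℝ × ℝ) :
        ((ρ : ℂ) * (Complex.I * p.1) * (Complex.I * p.2)) ^ n / (n.factorial : ℂ) *
          (gaussChar x p.1 * gaussChar y p.2)
        = (ρ : ℂ) ^ n / (n.factorial : ℂ) * (((Complex.I * p.1) ^ n * gaussChar x p.1) *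
          ((Complex.I * p.2) ^ n * gaussChar y p.2)) := by
      rw [mul_pow, mul_pow]; ring
    simp_rw [hfac]
    rw [integral_const_mul, Measure.volume_eq_prod,
      integral_prod_mul (fun s : ℝ => (Complex.I * s) ^ n * gaussChar x s)
        (fun t : ℝ => (Complex.I * t) ^ n * gaussChar y t),
      integral_pow_mul_gaussChar, integral_pow_mul_gaussChar]
    push_cast
    ring
  simp_rw [hterm] at h
  exact (hasSum_mul_left_iff (by positivity)).1 (Complex.hasSum_ofReal.1 h)

/-! ### Integration of the Mehler series over a quadrant -/

theorem integrable_bivGaussPDF {ρ : ℝ} (hρ : |ρ| < 1) :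
    Integrable fun p : ℝ × ℝ => bivGaussPDF ρ p.1 p.2 := by
  have hρ2 : 0 < 1 - ρ ^ 2 := by
    have := (sq_lt_one_iff_abs_lt_one ρ).2 hρ
    linarith
  have hc : 0 < (1 - |ρ|) / (2 * (1 - ρ ^ 2)) := div_pos (by linarith) (by linarith)
  refine Integrable.const_mul ?_ _
  refine (integrable_exp_neg_mul_add_sq hc).mono'
    (Continuous.aestronglyMeasurable (by fun_prop)) (Eventually.of_forall fun p => ?_)
  rw [Real.norm_of_nonneg (by positivity), neg_mul, div_mul_eq_mul_div, ← neg_div]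
  gcongr
  linarith [two_mul_abs_mul_le ρ p.1 p.2, le_abs_self (ρ * p.1 * p.2)]

theorem hasSum_setIntegral_bivGaussPDF {ρ : ℝ} (hρ : |ρ| < 1) (a b : ℝ) :
    HasSum (fun n : ℕ => ρ ^ n / (n.factorial : ℝ) *
        ((∫ x in Set.Ioi a, hermiteFun n x) * ∫ y in Set.Ioi b, hermiteFun n y))
      (∫ x in Set.Ioi a, ∫ y in Set.Ioi b, bivGaussPDF ρ x y) := by
  have h := hasSum_integral_of_summable_integral_norm
    (μ := (volume.restrict (Set.Ioi a)).prod (volume.restrict (Set.Ioi b)))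
    (F := fun (n : ℕ) (p : ℝ × ℝ) =>
      ρ ^ n / (n.factorial : ℝ) * (hermiteFun n p.1 * hermiteFun n p.2))
    (fun n => ((integrable_hermiteFun n).restrict.mul_prod
      (integrable_hermiteFun n).restrict).const_mul _) ?_
  · simp_rw [(hasSum_bivGaussPDF hρ _ _).tsum_eq, integral_const_mul,
      integral_prod_mul (hermiteFun _) (hermiteFun _)] at h
    rwa [integral_prod] at h
    rw [Measure.prod_restrict]
    exact (integrable_bivGaussPDF hρ).restrict
  · refine (summable_geometric_of_lt_one (abs_nonneg ρ) hρ).of_nonneg_of_le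
      (fun n => integral_nonneg fun p => norm_nonneg _) fun n => ?_
    simp only [norm_mul, integral_const_mul]
    rw [integral_prod_mul (fun x => ‖hermiteFun n x‖) (fun y => ‖hermiteFun n y‖)]
    have hf : (0 : ℝ) < n.factorial := by exact_mod_cast n.factorial_pos
    calc _ ≤ ‖ρ ^ n / (n.factorial : ℝ)‖ * (√(n.factorial) * √(n.factorial)) := by
          gcongr
          · exact setIntegral_abs_hermiteFun_le n _
          · exact setIntegral_abs_hermiteFun_le n _
      _ = |ρ| ^ n := by
          rw [Real.mul_self_sqrt hf.le, norm_div, norm_pow, Real.norm_of_nonneg hf.le,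
            Real.norm_eq_abs, div_mul_cancel₀ _ hf.ne']

/-- The tetrachoric series of Theorem 1 of the paper: the joint complementary CDF of a
standardized bivariate Gaussian pair with correlation `ρ ∈ (−1,1)` satisfies
`∫_a^∞ ∫_b^∞ f_ρ = (1−Φ(a))(1−Φ(b)) + φ(a)φ(b)·∑_{n=1}^∞ (ρⁿ/n!)·He_{n−1}(a)·He_{n−1}(b)`,
and the series converges. -/
theorem bivariate_gaussian_ccdf_series
    (ρ : ℝ) (hρ : ρ ∈ Set.Ioo (-1 : ℝ) 1) (a b : ℝ) :
    Summable (fun n : ℕ =>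
      ρ ^ (n + 1) / ((n + 1).factorial : ℝ) * He n a * He n b) ∧
    (∫ z₁ in Set.Ioi a, ∫ z₂ in Set.Ioi b, bivGaussPDF ρ z₁ z₂)
      = (1 - stdGaussCDF a) * (1 - stdGaussCDF b) +
          stdGaussPDF a * stdGaussPDF b *
            ∑' n : ℕ, ρ ^ (n + 1) / ((n + 1).factorial : ℝ) * He n a * He n b := by
  have h := hasSum_setIntegral_bivGaussPDF (abs_lt.2 hρ) a b
  rw [← hasSum_nat_add_iff' 1] at h
  simp only [Finset.sum_range_one, setIntegral_Ioi_hermiteFun_succ,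
    setIntegral_Ioi_hermiteFun_zero, pow_zero, Nat.factorial_zero, Nat.cast_one, div_one,
    one_mul] at h
  have hne : stdGaussPDF a * stdGaussPDF b ≠ 0 :=
    (mul_pos (stdGaussPDF_pos a) (stdGaussPDF_pos b)).ne'
  have hterm (n : ℕ) : ρ ^ (n + 1) / ((n + 1).factorial : ℝ) * (hermiteFun n a * hermiteFun n b)
      = stdGaussPDF a * stdGaussPDF b *
        (ρ ^ (n + 1) / ((n + 1).factorial : ℝ) * He n a * He n b) := by
    simp only [hermiteFun, He_eq_aeval_hermite]
    ring
  simp_rw [hterm] at h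
  refine ⟨(summable_mul_left_iff hne).1 h.summable, ?_⟩
  rw [← tsum_mul_left, h.tsum_eq]
  ring
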